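/- arXiv:2002.09682 — 2 statements merged into one kernel-verified Lean document; each statement's English description precedes it below -/
import Mathlib

section
/- Inductive characterisation of series-parallel contexts: PC^sp is the smallest set L of pomsets over Σ ∪ {*} such that * ∈ L; U·C ∈ L whenever U ∈ SP and C ∈ L; C·V ∈ L whenever C ∈ L and V ∈ SP; and U∥C ∈ L whenever U ∈ SP and C ∈ L. -/
namespace CKAH

open Classical

/-! ### Labelled posets and pomsets -/

/-- A labelled poset over alphabet `A`: a finite carrier with a partial order and labelling. -/
structure LPoset (A : Type) : Type 1 where
  carrier : Type
  [fin : Fintype carrier]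
  [ord : PartialOrder carrier]
  lab : carrier → A

attribute [instance] LPoset.fin LPoset.ord

/-- Isomorphism of labelled posets: an order isomorphism preserving labels. -/
def LPoset.Iso {A : Type} (u v : LPoset A) : Prop :=
  ∃ e : u.carrier ≃o v.carrier, ∀ x, v.lab (e x) = u.lab x

theorem LPoset.iso_equivalence (A : Type) : Equivalence (LPoset.Iso (A := A)) where
  refl u := ⟨OrderIso.refl _, fun _ => rfl⟩
  symm := by
    rintro u v ⟨e, he⟩
    exact ⟨e.symm, fun x => by rw [← he (e.symm x), OrderIso.apply_symm_apply]⟩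
  trans := by
    rintro u v w ⟨e, he⟩ ⟨f, hf⟩
    exact ⟨e.trans f, fun x => by rw [OrderIso.trans_apply, hf, he]⟩

instance pomSetoid (A : Type) : Setoid (LPoset A) := ⟨LPoset.Iso, LPoset.iso_equivalence A⟩

/-- A pomset is an isomorphism class of labelled posets. -/
def Pomset (A : Type) : Type 1 := Quotient (pomSetoid A)

/-- Sequential composition of labelled posets: disjoint union, everything on the left
below everything on the right (lexicographic sum order). -/
def LPoset.seqL {A : Type} (u v : LPoset A) : LPoset A where
  carrier := u.carrier ⊕ₗ v.carrier
  fin := inferInstanceAs (Fintype (u.carrier ⊕ v.carrier))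
  lab := fun x => Sum.elim u.lab v.lab (ofLex x)

/-- Parallel composition of labelled posets: disjoint union with no cross ordering. -/
def LPoset.parL {A : Type} (u v : LPoset A) : LPoset A where
  carrier := u.carrier ⊕ v.carrier
  lab := Sum.elim u.lab v.lab

def Pomset.seq {A : Type} : Pomset A → Pomset A → Pomset A :=
  Quotient.map₂ LPoset.seqL (by
    rintro u₁ u₂ ⟨e, he⟩ v₁ v₂ ⟨f, hf⟩
    refine ⟨(RelIso.sumLexCongr e f :
      (u₁.carrier ⊕ₗ v₁.carrier) ≃o (u₂.carrier ⊕ₗ v₂.carrier)), ?_⟩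
    rintro (x | x)
    · exact he x
    · exact hf x)

/-- Order isomorphism between disjoint-union orders, from component isomorphisms. -/
def sumOrderIso {α β γ δ : Type} [PartialOrder α] [PartialOrder β] [PartialOrder γ]
    [PartialOrder δ] (e : α ≃o γ) (f : β ≃o δ) : (α ⊕ β) ≃o (γ ⊕ δ) where
  toEquiv := Equiv.sumCongr e.toEquiv f.toEquiv
  map_rel_iff' := by
    rintro (x | x) (y | y) <;> simp [Sum.le_def, e.le_iff_le, f.le_iff_le]

def Pomset.par {A : Type} : Pomset A → Pomset A → Pomset A :=
  Quotient.map₂ LPoset.parL (by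
    rintro u₁ u₂ ⟨e, he⟩ v₁ v₂ ⟨f, hf⟩
    refine ⟨sumOrderIso e f, ?_⟩
    rintro (x | x)
    · exact he x
    · exact hf x)

def LPoset.emptyL (A : Type) : LPoset A := { carrier := Fin 0, lab := fun x => x.elim0 }

def LPoset.singleL {A : Type} (a : A) : LPoset A := { carrier := PUnit, lab := fun _ => a }

/-- The empty pomset `1`. -/
def Pomset.empty (A : Type) : Pomset A := ⟦LPoset.emptyL A⟧

/-- The single-letter pomset. -/
def Pomset.single {A : Type} (a : A) : Pomset A := ⟦LPoset.singleL a⟧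

/-- Subsumption on labelled posets: `u ⊑ v` iff there is a label-preserving
order-preserving bijection from the carrier of `v` to that of `u`. -/
def LPoset.subL {A : Type} (u v : LPoset A) : Prop :=
  ∃ h : v.carrier ≃ u.carrier,
    (∀ x, u.lab (h x) = v.lab x) ∧ ∀ x y : v.carrier, x ≤ y → h x ≤ h y

/-- Subsumption of pomsets: `Pomset.sub U V` means `U ⊑ V`. -/
def Pomset.sub {A : Type} : Pomset A → Pomset A → Prop :=
  Quotient.lift₂ LPoset.subL (by
    rintro u₁ v₁ u₂ v₂ ⟨e, he⟩ ⟨f, hf⟩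
    refine propext ⟨?_, ?_⟩
    · rintro ⟨h, hl, hm⟩
      refine ⟨(f.toEquiv.symm.trans h).trans e.toEquiv, fun x => ?_, fun x y hxy => ?_⟩
      · show u₂.lab (e (h (f.symm x))) = v₂.lab x
        rw [he, hl, ← hf (f.symm x), OrderIso.apply_symm_apply]
      · simp only [Equiv.trans_apply]
        exact e.le_iff_le.mpr (hm _ _ (f.symm.le_iff_le.mpr hxy))
    · rintro ⟨h, hl, hm⟩
      refine ⟨(f.toEquiv.trans h).trans e.toEquiv.symm, fun x => ?_, fun x y hxy => ?_⟩
      · show u₁.lab (e.symm (h (f x))) = v₁.lab x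
        rw [← he (e.symm (h (f x))), OrderIso.apply_symm_apply, hl, hf]
      · simp only [Equiv.trans_apply]
        exact e.symm.le_iff_le.mpr (hm _ _ (f.le_iff_le.mpr hxy)))

def LPoset.isWordL {A : Type} (u : LPoset A) : Prop := ∀ x y : u.carrier, x ≤ y ∨ y ≤ x

/-- A pomset is a word when it is totally ordered. -/
def Pomset.IsWord {A : Type} : Pomset A → Prop :=
  Quotient.lift LPoset.isWordL (by
    rintro u v ⟨e, -⟩
    refine propext ⟨fun h x y => ?_, fun h x y => ?_⟩
    · rcases h (e.symm x) (e.symm y) with h' | h'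
      · exact Or.inl (e.symm.le_iff_le.mp h')
      · exact Or.inr (e.symm.le_iff_le.mp h')
    · rcases h (e x) (e y) with h' | h'
      · exact Or.inl (e.le_iff_le.mp h')
      · exact Or.inr (e.le_iff_le.mp h'))

def LPoset.mapL {A B : Type} (f : A → B) (u : LPoset A) : LPoset B :=
  { carrier := u.carrier, lab := f ∘ u.lab }

/-- Relabelling of pomsets along a function on letters. -/
def Pomset.map {A B : Type} (f : A → B) : Pomset A → Pomset B :=
  Quotient.map (LPoset.mapL f)
    (by rintro u v ⟨e, he⟩; exact ⟨e, fun x => congrArg f (he x)⟩)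

def LPoset.overL {A : Type} (Γ : Set A) (u : LPoset A) : Prop := ∀ x, u.lab x ∈ Γ

/-- All labels of the pomset belong to `Γ`. -/
def Pomset.Over {A : Type} (Γ : Set A) : Pomset A → Prop :=
  Quotient.lift (LPoset.overL Γ) (by
    rintro u v ⟨e, he⟩
    refine propext ⟨fun h x => ?_, fun h x => ?_⟩
    · have h2 := he (e.symm x)
      rw [OrderIso.apply_symm_apply] at h2
      rw [h2]; exact h _
    · rw [← he x]; exact h _)

/-- Series-parallel pomsets. -/
inductive Pomset.IsSP {A : Type} : Pomset A → Prop
  | empty : Pomset.IsSP (Pomset.empty A)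
  | single (a : A) : Pomset.IsSP (Pomset.single a)
  | seq {U V : Pomset A} : Pomset.IsSP U → Pomset.IsSP V → Pomset.IsSP (Pomset.seq U V)
  | par {U V : Pomset A} : Pomset.IsSP U → Pomset.IsSP V → Pomset.IsSP (Pomset.par U V)

def SPset (A : Type) : Set (Pomset A) := {U | U.IsSP}

/-! ### Pomset contexts -/

/-- Contexts are pomsets over `Option A`, where `none` plays the role of `*`.
`uniqueStarL` says there is exactly one `*`-labelled node. -/
def LPoset.uniqueStarL {A : Type} (c : LPoset (Option A)) : Prop := ∃! x, c.lab x = none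

theorem LPoset.uniqueStarL_congr {A : Type} {u v : LPoset (Option A)}
    (e : u.carrier ≃o v.carrier) (he : ∀ x, v.lab (e x) = u.lab x) :
    u.uniqueStarL ↔ v.uniqueStarL := by
  constructor
  · rintro ⟨x, hx, hux⟩
    refine ⟨e x, show v.lab (e x) = none by rw [he]; exact hx, fun y hy => ?_⟩
    have h2 := he (e.symm y)
    rw [OrderIso.apply_symm_apply] at h2
    have h3 : e.symm y = x := hux _ (h2.symm.trans hy)
    rw [← h3, OrderIso.apply_symm_apply]
  · rintro ⟨x, hx, hvx⟩
    refine ⟨e.symm x, ?_, fun y hy => ?_⟩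
    · show u.lab (e.symm x) = none
      have h2 := he (e.symm x)
      rw [OrderIso.apply_symm_apply] at h2
      rw [← h2]; exact hx
    · have h3 : e y = x := hvx _ (show v.lab (e y) = none by rw [he]; exact hy)
      rw [← h3, OrderIso.symm_apply_apply]

/-- A pomset context: exactly one node labelled `*`. -/
def Pomset.IsCtx {A : Type} : Pomset (Option A) → Prop :=
  Quotient.lift LPoset.uniqueStarL
    (fun _ _ h => propext (LPoset.uniqueStarL_congr h.choose h.choose_spec))

/-- Series-parallel pomset contexts. -/
def Pomset.IsSPCtx {A : Type} (C : Pomset (Option A)) : Prop := C.IsCtx ∧ C.IsSP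

/-- Sequential (totally ordered) pomset contexts. -/
def Pomset.IsSeqCtx {A : Type} (C : Pomset (Option A)) : Prop := C.IsCtx ∧ C.IsWord

/-- The trivial context `*`. -/
def starCtx (A : Type) : Pomset (Option A) := Pomset.single (none : Option A)

theorem option_get_eq_get {α : Type} {o₁ o₂ : Option α} (h : o₁ = o₂) (h₁ : o₁.isSome)
    (h₂ : o₂.isSome) : o₁.get h₁ = o₂.get h₂ := by subst h; rfl

/-- The order of `C[U]`: the orders of `C` (restricted away from `*`) and of `U`, with a
point of `C` below (resp. above) all of `U` when it is below (resp. above) the unique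
`*`-node of `C`.  (For well-definedness of the order, the cross-relations are guarded by
the requirement that the star node is unique, which holds for every genuine context.) -/
def LPoset.insLe {A : Type} (c : LPoset (Option A)) (u : LPoset A) :
    ({x : c.carrier // c.lab x ≠ none} ⊕ u.carrier) →
    ({x : c.carrier // c.lab x ≠ none} ⊕ u.carrier) → Prop
  | Sum.inl x, Sum.inl y => x.val ≤ y.val
  | Sum.inr x, Sum.inr y => x ≤ y
  | Sum.inl x, Sum.inr _ => c.uniqueStarL ∧ ∃ s, c.lab s = none ∧ x.val ≤ s
  | Sum.inr _, Sum.inl y => c.uniqueStarL ∧ ∃ s, c.lab s = none ∧ s ≤ y.val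

/-- Insertion of a labelled poset `u` into the gap of a context `c`: the `*`-labelled
node is removed and `u` is put in its place, inheriting the order relations of `*`. -/
noncomputable def LPoset.insL {A : Type} (c : LPoset (Option A)) (u : LPoset A) :
    LPoset A where
  carrier := {x : c.carrier // c.lab x ≠ none} ⊕ u.carrier
  fin := by classical exact inferInstance
  ord :=
    { le := LPoset.insLe c u
      lt := fun p q => LPoset.insLe c u p q ∧ ¬ LPoset.insLe c u q p
      lt_iff_le_not_ge := fun _ _ => Iff.rfl
      le_refl := by rintro (x | x) <;> exact le_refl _
      le_trans := by
        rintro (x | x) (y | y) (z | z) h1 h2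
        · exact le_trans h1 h2
        · obtain ⟨hu, s, hs, hys⟩ := h2
          exact ⟨hu, s, hs, le_trans h1 hys⟩
        · obtain ⟨hu, s, hs, hxs⟩ := h1
          obtain ⟨-, t, ht, htz⟩ := h2
          obtain ⟨w, hw, huniq⟩ := hu
          have hst : s = t := (huniq s hs).trans (huniq t ht).symm
          exact le_trans (hst ▸ hxs) htz
        · exact h1
        · obtain ⟨hu, s, hs, hsy⟩ := h1
          exact ⟨hu, s, hs, le_trans hsy h2⟩
        · obtain ⟨hu, s, hs, hsy⟩ := h1
          obtain ⟨-, t, ht, hyt⟩ := h2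
          obtain ⟨w, hw, huniq⟩ := hu
          have hst : s = t := (huniq s hs).trans (huniq t ht).symm
          have hy : y.val = s := le_antisymm (hst.symm ▸ hyt) hsy
          exact absurd (hy.symm ▸ hs) y.prop
        · exact h2
        · exact le_trans h1 h2
      le_antisymm := by
        rintro (x | x) (y | y) h1 h2
        · exact congrArg Sum.inl (Subtype.ext (le_antisymm h1 h2))
        · obtain ⟨hu, s, hs, hxs⟩ := h1
          obtain ⟨-, t, ht, htx⟩ := h2
          obtain ⟨w, hw, huniq⟩ := hu
          have hst : s = t := (huniq s hs).trans (huniq t ht).symm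
          have hx : x.val = s := le_antisymm hxs (hst.symm ▸ htx)
          exact absurd (hx.symm ▸ hs) x.prop
        · obtain ⟨hu, s, hs, hsy⟩ := h1
          obtain ⟨-, t, ht, hyt⟩ := h2
          obtain ⟨w, hw, huniq⟩ := hu
          have hst : s = t := (huniq s hs).trans (huniq t ht).symm
          have hy : y.val = s := le_antisymm (hst.symm ▸ hyt) hsy
          exact absurd (hy.symm ▸ hs) y.prop
        · exact congrArg Sum.inr (le_antisymm h1 h2) }
  lab := Sum.elim (fun x => (c.lab x.val).get (Option.isSome_iff_ne_none.mpr x.prop)) u.lab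

/-- `Pomset.ins C U` is `C[U]`: plugging the pomset `U` into the gap of the context `C`. -/
noncomputable def Pomset.ins {A : Type} : Pomset (Option A) → Pomset A → Pomset A :=
  Quotient.map₂ LPoset.insL (by
    rintro c₁ c₂ ⟨e, he⟩ u₁ u₂ ⟨f, hf⟩
    have hstar : c₁.uniqueStarL ↔ c₂.uniqueStarL := LPoset.uniqueStarL_congr e he
    refine ⟨{ toEquiv := Equiv.sumCongr
                (e.toEquiv.subtypeEquiv fun x => by
                  rw [show c₂.lab (e.toEquiv x) = c₁.lab x from he x]) f.toEquiv
              map_rel_iff' := ?_ }, ?_⟩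
    · rintro (x | x) (y | y)
      · exact e.le_iff_le
      · show (c₂.uniqueStarL ∧ ∃ s, c₂.lab s = none ∧ (e x.val : c₂.carrier) ≤ s) ↔
             (c₁.uniqueStarL ∧ ∃ s, c₁.lab s = none ∧ x.val ≤ s)
        constructor
        · rintro ⟨hu, s, hs, hxs⟩
          refine ⟨hstar.mpr hu, e.symm s, ?_, ?_⟩
          · have h2 := he (e.symm s)
            rw [OrderIso.apply_symm_apply] at h2
            rw [← h2]; exact hs
          · exact e.le_iff_le.mp (by rw [OrderIso.apply_symm_apply]; exact hxs)
        · rintro ⟨hu, s, hs, hxs⟩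
          exact ⟨hstar.mp hu, e s, by rw [he]; exact hs, e.le_iff_le.mpr hxs⟩
      · show (c₂.uniqueStarL ∧ ∃ s, c₂.lab s = none ∧ s ≤ (e y.val : c₂.carrier)) ↔
             (c₁.uniqueStarL ∧ ∃ s, c₁.lab s = none ∧ s ≤ y.val)
        constructor
        · rintro ⟨hu, s, hs, hsy⟩
          refine ⟨hstar.mpr hu, e.symm s, ?_, ?_⟩
          · have h2 := he (e.symm s)
            rw [OrderIso.apply_symm_apply] at h2
            rw [← h2]; exact hs
          · exact e.le_iff_le.mp (by rw [OrderIso.apply_symm_apply]; exact hsy)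
        · rintro ⟨hu, s, hs, hsy⟩
          exact ⟨hstar.mp hu, e s, by rw [he]; exact hs, e.le_iff_le.mpr hsy⟩
      · exact f.le_iff_le
    · rintro (x | x)
      · exact option_get_eq_get (he x.val) _ _
      · exact hf x)

/-! ### Pomset languages -/

abbrev Lang (A : Type) := Set (Pomset A)

def Lang.seq {A : Type} (L K : Lang A) : Lang A :=
  {W | ∃ U ∈ L, ∃ V ∈ K, W = Pomset.seq U V}

def Lang.par {A : Type} (L K : Lang A) : Lang A :=
  {W | ∃ U ∈ L, ∃ V ∈ K, W = Pomset.par U V}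

def Lang.pow {A : Type} (L : Lang A) : ℕ → Lang A
  | 0 => {Pomset.empty A}
  | n + 1 => Lang.seq (Lang.pow L n) L

def Lang.star {A : Type} (L : Lang A) : Lang A := ⋃ n, L.pow n

/-- Application of a context to a language: `C[L] = {C[U] : U ∈ L}`. -/
def Ctx.img {A : Type} (C : Pomset (Option A)) (L : Lang A) : Lang A :=
  {W | ∃ U ∈ L, W = C.ins U}

/-! ### CKA terms and semantics -/

inductive Term (A : Type) : Type
  | zero : Term A
  | one : Term A
  | var : A → Term A
  | add : Term A → Term A → Term A
  | seq : Term A → Term A → Term A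
  | par : Term A → Term A → Term A
  | star : Term A → Term A

/-- Pomset language semantics of CKA terms. -/
def Term.lang {A : Type} : Term A → Lang A
  | .zero => ∅
  | .one => {Pomset.empty A}
  | .var a => {Pomset.single a}
  | .add e f => e.lang ∪ f.lang
  | .seq e f => Lang.seq e.lang f.lang
  | .par e f => Lang.par e.lang f.lang
  | .star e => Lang.star e.lang

/-- Sets of hypotheses: a hypothesis `e ≤ f` is the pair `(e, f)`. -/
abbrev HypSet (A : Type) := Set (Term A × Term A)

/-- The congruence `≡^H` on CKA terms generated by the CKA axioms and the hypotheses `H`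
(the constructor `hyp` encodes `e ≦^H f`, i.e. `e + f ≡^H f`, for `e ≤ f ∈ H`). -/
inductive CongH {A : Type} (H : HypSet A) : Term A → Term A → Prop
  | refl (e) : CongH H e e
  | symm {e f} : CongH H e f → CongH H f e
  | trans {e f g} : CongH H e f → CongH H f g → CongH H e g
  | addCong {e e' f f'} : CongH H e e' → CongH H f f' → CongH H (.add e f) (.add e' f')
  | seqCong {e e' f f'} : CongH H e e' → CongH H f f' → CongH H (.seq e f) (.seq e' f')
  | parCong {e e' f f'} : CongH H e e' → CongH H f f' → CongH H (.par e f) (.par e' f')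
  | starCong {e e'} : CongH H e e' → CongH H (.star e) (.star e')
  | addZero (e) : CongH H (.add e .zero) e
  | addIdem (e) : CongH H (.add e e) e
  | addComm (e f) : CongH H (.add e f) (.add f e)
  | addAssoc (e f g) : CongH H (.add e (.add f g)) (.add (.add e f) g)
  | seqAssoc (e f g) : CongH H (.seq e (.seq f g)) (.seq (.seq e f) g)
  | seqDistL (e f g) : CongH H (.seq e (.add f g)) (.add (.seq e f) (.seq e g))
  | seqDistR (e f g) : CongH H (.seq (.add e f) g) (.add (.seq e g) (.seq f g))
  | seqOneR (e) : CongH H (.seq e .one) e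
  | seqOneL (e) : CongH H (.seq .one e) e
  | seqZeroR (e) : CongH H (.seq e .zero) .zero
  | seqZeroL (e) : CongH H (.seq .zero e) .zero
  | parComm (e f) : CongH H (.par e f) (.par f e)
  | parOne (e) : CongH H (.par e .one) e
  | parZero (e) : CongH H (.par e .zero) .zero
  | parAssoc (e f g) : CongH H (.par e (.par f g)) (.par (.par e f) g)
  | parDist (e f g) : CongH H (.par e (.add f g)) (.add (.par e f) (.par e g))
  | starUnfoldL (e) : CongH H (.add .one (.seq e (.star e))) (.star e)
  | starUnfoldR (e) : CongH H (.add .one (.seq (.star e) e)) (.star e)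
  | lfpL {e f g} : CongH H (.add (.add e (.seq f g)) g) g →
      CongH H (.add (.seq (.star f) e) g) g
  | lfpR {e f g} : CongH H (.add (.add e (.seq f g)) f) f →
      CongH H (.add (.seq e (.star g)) f) f
  | hyp {e f} : (e, f) ∈ H → CongH H (.add e f) f

/-- `e ≦^H f`, the natural order `e + f ≡^H f`. -/
def LeH {A : Type} (H : HypSet A) (e f : Term A) : Prop := CongH H (.add e f) f

/-- The `H`-closure of a pomset language, as an inductive predicate: the smallest language
containing `L` such that for all `e ≤ f ∈ H` and series-parallel contexts `C`,
if `C[⟦f⟧] ⊆ cl` then `C[⟦e⟧] ⊆ cl`. -/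
inductive closure {A : Type} (H : HypSet A) (L : Lang A) : Pomset A → Prop
  | base {U} : U ∈ L → closure H L U
  | step {e f : Term A} (hef : (e, f) ∈ H) {C : Pomset (Option A)} (hC : C.IsSPCtx)
      (hf : ∀ V ∈ f.lang, closure H L (C.ins V)) {U} (hU : U ∈ e.lang) :
      closure H L (C.ins U)

/-- `cl H L` is the `H`-closure of `L`. -/
def cl {A : Type} (H : HypSet A) (L : Lang A) : Lang A := {U | closure H L U}

/-- The sequential closure: like `cl` but only sequential contexts are used. -/
inductive seqClosure {A : Type} (H : HypSet A) (L : Lang A) : Pomset A → Prop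
  | base {U} : U ∈ L → seqClosure H L U
  | step {e f : Term A} (hef : (e, f) ∈ H) {C : Pomset (Option A)} (hC : C.IsSeqCtx)
      (hf : ∀ V ∈ f.lang, seqClosure H L (C.ins V)) {U} (hU : U ∈ e.lang) :
      seqClosure H L (C.ins U)

def seqCl {A : Type} (H : HypSet A) (L : Lang A) : Lang A := {U | seqClosure H L U}

/-! ### Implication, completeness, reductions -/

/-- `H` implies `H'`: every hypothesis of `H'` is derivable from `H`. -/
def Implies {A : Type} (H H' : HypSet A) : Prop := ∀ p ∈ H', LeH H p.1 p.2

/-- `H` is complete: semantic equivalence implies axiomatic equivalence. -/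
def Complete {A : Type} (H : HypSet A) : Prop :=
  ∀ e f : Term A, cl H e.lang = cl H f.lang → CongH H e f

/-- A reduction from `H` to `H'` (presupposing that `H` implies `H'`). -/
structure IsReduction {A : Type} (H H' : HypSet A) (r : Term A → Term A) : Prop where
  implies : Implies H H'
  equiv : ∀ e, CongH H e (r e)
  reflect : ∀ e f : Term A, cl H e.lang = cl H f.lang → cl H' (r e).lang = cl H' (r f).lang

def Reduces {A : Type} (H H' : HypSet A) : Prop := ∃ r, IsReduction H H' r

/-- A strong reduction from `H` to `H'`. -/
structure IsStrongReduction {A : Type} (H H' : HypSet A) (r : Term A → Term A)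
    extends IsReduction H H' r : Prop where
  strong : ∀ e : Term A, cl H e.lang = cl H' (r e).lang

def StronglyReduces {A : Type} (H H' : HypSet A) : Prop := ∃ r, IsStrongReduction H H' r

/-- `H` factorises into `H₀` and `H₁`. -/
def Factorises {A : Type} (H H₀ H₁ : HypSet A) : Prop :=
  Implies H H₀ ∧ Implies H H₁ ∧ ∀ L : Lang A, L ⊆ SPset A → cl H L = cl H₁ (cl H₀ L)

/-! ### The exchange hypotheses and sp-subsumption -/

/-- The exchange hypotheses `(e∥f)·(g∥h) ≤ (e·g)∥(f·h)`. -/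
def exch (A : Type) : HypSet A :=
  {p | ∃ e f g h : Term A,
    p = (Term.seq (.par e f) (.par g h), Term.par (.seq e g) (.seq f h))}

/-- `⊑^sp`: the smallest precongruence on series-parallel pomsets satisfying the
exchange inequality. -/
inductive spSub {A : Type} : Pomset A → Pomset A → Prop
  | refl {U : Pomset A} : U.IsSP → spSub U U
  | trans {U V W} : spSub U V → spSub V W → spSub U W
  | seqCong {U V U' V'} : spSub U V → spSub U' V' → spSub (Pomset.seq U U') (Pomset.seq V V')
  | parCong {U V U' V'} : spSub U V → spSub U' V' → spSub (Pomset.par U U') (Pomset.par V V')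
  | exch {U V W X : Pomset A} : U.IsSP → V.IsSP → W.IsSP → X.IsSP →
      spSub (Pomset.seq (Pomset.par U V) (Pomset.par W X))
            (Pomset.par (Pomset.seq U W) (Pomset.seq V X))

/-! ### KA terms, grounded hypotheses, sequential reductions -/

/-- A term is a KA term when it contains no `∥`. -/
def Term.noPar {A : Type} : Term A → Prop
  | .zero => True
  | .one => True
  | .var _ => True
  | .add e f => e.noPar ∧ f.noPar
  | .seq e f => e.noPar ∧ f.noPar
  | .par _ _ => False
  | .star e => e.noPar

/-- A non-empty word. -/
def IsNonemptyWord {A : Type} (W : Pomset A) : Prop := W.IsWord ∧ W ≠ Pomset.empty A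

/-- A set of hypotheses is grounded when in each hypothesis `e ≤ f`, `e` is a KA term and
`⟦f⟧ = {W}` for a non-empty word `W`. -/
def Grounded {A : Type} (H : HypSet A) : Prop :=
  ∀ p ∈ H, p.1.noPar ∧ ∃ W : Pomset A, IsNonemptyWord W ∧ p.2.lang = {W}

/-- `≡_KA^H`: the congruence on terms generated by the axioms of `≡` not involving `∥`
together with the hypotheses of `H`. -/
inductive KACong {A : Type} (H : HypSet A) : Term A → Term A → Prop
  | refl (e) : KACong H e e
  | symm {e f} : KACong H e f → KACong H f e
  | trans {e f g} : KACong H e f → KACong H f g → KACong H e g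
  | addCong {e e' f f'} : KACong H e e' → KACong H f f' → KACong H (.add e f) (.add e' f')
  | seqCong {e e' f f'} : KACong H e e' → KACong H f f' → KACong H (.seq e f) (.seq e' f')
  | starCong {e e'} : KACong H e e' → KACong H (.star e) (.star e')
  | addZero (e) : KACong H (.add e .zero) e
  | addIdem (e) : KACong H (.add e e) e
  | addComm (e f) : KACong H (.add e f) (.add f e)
  | addAssoc (e f g) : KACong H (.add e (.add f g)) (.add (.add e f) g)
  | seqAssoc (e f g) : KACong H (.seq e (.seq f g)) (.seq (.seq e f) g)
  | seqDistL (e f g) : KACong H (.seq e (.add f g)) (.add (.seq e f) (.seq e g))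
  | seqDistR (e f g) : KACong H (.seq (.add e f) g) (.add (.seq e g) (.seq f g))
  | seqOneR (e) : KACong H (.seq e .one) e
  | seqOneL (e) : KACong H (.seq .one e) e
  | seqZeroR (e) : KACong H (.seq e .zero) .zero
  | seqZeroL (e) : KACong H (.seq .zero e) .zero
  | starUnfoldL (e) : KACong H (.add .one (.seq e (.star e))) (.star e)
  | starUnfoldR (e) : KACong H (.add .one (.seq (.star e) e)) (.star e)
  | lfpL {e f g} : KACong H (.add (.add e (.seq f g)) g) g →
      KACong H (.add (.seq (.star f) e) g) g
  | lfpR {e f g} : KACong H (.add (.add e (.seq f g)) f) f →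
      KACong H (.add (.seq e (.star g)) f) f
  | hyp {e f} : (e, f) ∈ H → KACong H (.add e f) f

/-- A sequential reduction from `H` to `H'`. -/
structure IsSeqReduction {A : Type} (H H' : HypSet A) (r : Term A → Term A) : Prop where
  implies : Implies H H'
  equiv : ∀ e : Term A, e.noPar → KACong H e (r e)
  closure_eq : ∀ e : Term A, e.noPar → seqCl H e.lang = seqCl H' (r e).lang

/-- Extension of a map on (KA) terms to all CKA terms, homomorphically on `∥`. -/
def parExt {A : Type} (r : Term A → Term A) : Term A → Term A
  | .par e f => .par (parExt r e) (parExt r f)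
  | e => r e

/-! ### Inductive characterisation of sp contexts -/

/-- The generators of series-parallel contexts (Lemma: `PC^sp` is the smallest such set). -/
inductive GenCtx {A : Type} : Pomset (Option A) → Prop
  | star : GenCtx (Pomset.single (none : Option A))
  | seqL {U : Pomset A} {C} : U.IsSP → GenCtx C → GenCtx (Pomset.seq (Pomset.map some U) C)
  | seqR {C} {V : Pomset A} : GenCtx C → V.IsSP → GenCtx (Pomset.seq C (Pomset.map some V))
  | par {U : Pomset A} {C} : U.IsSP → GenCtx C → GenCtx (Pomset.par (Pomset.map some U) C)

/-! ### Reification -/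

/-- Homomorphic extension of a letter map to terms. -/
def rTerm {A : Type} (r : A → Term A) : Term A → Term A
  | .zero => .zero
  | .one => .one
  | .var a => r a
  | .add e f => .add (rTerm r e) (rTerm r f)
  | .seq e f => .seq (rTerm r e) (rTerm r f)
  | .par e f => .par (rTerm r e) (rTerm r f)
  | .star e => .star (rTerm r e)

/-- All letters of a term lie in `Γ`. -/
def TermOver {A : Type} (Γ : Set A) : Term A → Prop
  | .zero => True
  | .one => True
  | .var a => a ∈ Γ
  | .add e f => TermOver Γ e ∧ TermOver Γ f
  | .seq e f => TermOver Γ e ∧ TermOver Γ f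
  | .par e f => TermOver Γ e ∧ TermOver Γ f
  | .star e => TermOver Γ e

/-- Extension of a letter map `r` to (series-parallel) pomsets, as a relation:
`rMap r U V` means `V ∈ r(U)`. -/
inductive rMap {A : Type} (r : A → Term A) : Pomset A → Pomset A → Prop
  | one : rMap r (Pomset.empty A) (Pomset.empty A)
  | var (a : A) {V} : V ∈ (r a).lang → rMap r (Pomset.single a) V
  | seq {U U' V V'} : rMap r U V → rMap r U' V' →
      rMap r (Pomset.seq U U') (Pomset.seq V V')
  | par {U U' V V'} : rMap r U V → rMap r U' V' →
      rMap r (Pomset.par U U') (Pomset.par V V')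

/-- Image of a language under (the pomset extension of) `r`. -/
def rImg {A : Type} (r : A → Term A) (L : Lang A) : Lang A := {V | ∃ U ∈ L, rMap r U V}

/-- Series-parallel pomsets over the subalphabet `Γ`. -/
def SPover {A : Type} (Γ : Set A) : Lang A := {U | U.IsSP ∧ U.Over Γ}

/-- `r : Σ → Term Γ` is a reification from `H` to `H'`. -/
structure IsReification {A : Type} (Γ : Set A) (H H' : HypSet A) (r : A → Term A) : Prop where
  toGamma : ∀ a : A, TermOver Γ (r a)
  equiv : ∀ a : A, CongH H (r a) (.var a)
  expansive : ∀ a ∈ Γ, LeH (∅ : HypSet A) (.var a) (r a)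
  preserves : ∀ L : Lang A, L ⊆ SPover Γ → cl H' L ⊆ SPover Γ
  hyps : ∀ p ∈ H, LeH H' (rTerm r p.1) (rTerm r p.2)

end CKAH

namespace CKAH


theorem existsUnique_sum {α β : Type} (p : α ⊕ β → Prop) :
    (∃! x, p x) ↔ ((∃! x, p (.inl x)) ∧ ∀ y, ¬ p (.inr y)) ∨
      ((∀ x, ¬ p (.inl x)) ∧ ∃! y, p (.inr y)) := by
  constructor
  · rintro ⟨x | x, hx, hu⟩
    · exact Or.inl ⟨⟨x, hx, fun y hy => Sum.inl.inj (hu _ hy)⟩,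
        fun y hy => (Sum.inr_ne_inl (hu _ hy)).elim⟩
    · exact Or.inr ⟨fun y hy => (Sum.inl_ne_inr (hu _ hy)).elim,
        ⟨x, hx, fun y hy => Sum.inr.inj (hu _ hy)⟩⟩
  · rintro (⟨⟨x, hx, hu⟩, h⟩ | ⟨h, ⟨x, hx, hu⟩⟩)
    · refine ⟨_, hx, ?_⟩
      rintro (y | y) hy
      · exact congrArg _ (hu _ hy)
      · exact absurd hy (h y)
    · refine ⟨_, hx, ?_⟩
      rintro (y | y) hy
      · exact absurd hy (h y)
      · exact congrArg _ (hu _ hy)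

/-- No node is labelled by the star. -/
def NoStar {A : Type} (U : Pomset (Option A)) : Prop := U.Over {a | ¬ a = none}

theorem noStar_seq {A : Type} (U V : Pomset (Option A)) :
    NoStar (U.seq V) ↔ NoStar U ∧ NoStar V := by
  induction U using Quotient.inductionOn
  induction V using Quotient.inductionOn
  rename_i u v
  exact Sum.forall (p := fun x => ¬ Sum.elim u.lab v.lab x = none)

theorem noStar_par {A : Type} (U V : Pomset (Option A)) :
    NoStar (U.par V) ↔ NoStar U ∧ NoStar V := by
  induction U using Quotient.inductionOn
  induction V using Quotient.inductionOn
  rename_i u v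
  exact Sum.forall (p := fun x => ¬ Sum.elim u.lab v.lab x = none)

theorem noStar_map {A : Type} (U : Pomset A) : NoStar (U.map some) := by
  induction U using Quotient.inductionOn
  exact fun x => Option.some_ne_none _

theorem isCtx_seq {A : Type} (U V : Pomset (Option A)) :
    (U.seq V).IsCtx ↔ (U.IsCtx ∧ NoStar V) ∨ (NoStar U ∧ V.IsCtx) := by
  induction U using Quotient.inductionOn
  induction V using Quotient.inductionOn
  rename_i u v
  exact existsUnique_sum (fun x => Sum.elim u.lab v.lab x = none)

theorem isCtx_par {A : Type} (U V : Pomset (Option A)) :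
    (U.par V).IsCtx ↔ (U.IsCtx ∧ NoStar V) ∨ (NoStar U ∧ V.IsCtx) := by
  induction U using Quotient.inductionOn
  induction V using Quotient.inductionOn
  rename_i u v
  exact existsUnique_sum (fun x => Sum.elim u.lab v.lab x = none)

theorem par_comm' {A : Type} (U V : Pomset A) : U.par V = V.par U := by
  induction U using Quotient.inductionOn
  induction V using Quotient.inductionOn
  rename_i u v
  refine Quotient.sound ⟨OrderIso.sumComm u.carrier v.carrier, ?_⟩
  rintro (x | x) <;> rfl

theorem map_empty {A B : Type} (f : A → B) :
    (Pomset.empty A).map f = Pomset.empty B :=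
  Quotient.sound ⟨OrderIso.refl _, fun x => Fin.elim0 x⟩

theorem map_single {A B : Type} (f : A → B) (a : A) :
    (Pomset.single a).map f = Pomset.single (f a) := rfl

theorem map_seq {A B : Type} (f : A → B) (U V : Pomset A) :
    (U.seq V).map f = (U.map f).seq (V.map f) := by
  induction U using Quotient.inductionOn
  induction V using Quotient.inductionOn
  rename_i u v
  refine Quotient.sound ⟨OrderIso.refl _, ?_⟩
  rintro (x | x) <;> rfl

theorem map_par {A B : Type} (f : A → B) (U V : Pomset A) :
    (U.par V).map f = (U.map f).par (V.map f) := by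
  induction U using Quotient.inductionOn
  induction V using Quotient.inductionOn
  rename_i u v
  refine Quotient.sound ⟨OrderIso.refl _, ?_⟩
  rintro (x | x) <;> rfl

theorem isSP_map {A B : Type} (f : A → B) {U : Pomset A} (h : U.IsSP) :
    (U.map f).IsSP := by
  induction h with
  | empty => rw [map_empty]; exact .empty
  | single a => rw [map_single]; exact .single _
  | seq _ _ h1 h2 => rw [map_seq]; exact h1.seq h2
  | par _ _ h1 h2 => rw [map_par]; exact h1.par h2

theorem exists_map {A : Type} {U : Pomset (Option A)} (h : U.IsSP) (hn : NoStar U) :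
    ∃ V : Pomset A, V.IsSP ∧ V.map some = U := by
  induction h with
  | empty => exact ⟨_, .empty, map_empty _⟩
  | single a =>
    cases a with
    | none => exact absurd rfl (hn PUnit.unit)
    | some a => exact ⟨_, .single a, rfl⟩
  | seq _ _ h1 h2 =>
    obtain ⟨V, hV, rfl⟩ := h1 ((noStar_seq _ _).1 hn).1
    obtain ⟨W, hW, rfl⟩ := h2 ((noStar_seq _ _).1 hn).2
    exact ⟨_, hV.seq hW, map_seq _ _ _⟩
  | par _ _ h1 h2 =>
    obtain ⟨V, hV, rfl⟩ := h1 ((noStar_par _ _).1 hn).1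
    obtain ⟨W, hW, rfl⟩ := h2 ((noStar_par _ _).1 hn).2
    exact ⟨_, hV.par hW, map_par _ _ _⟩

/-- **Inductive characterisation of series-parallel contexts**: `PC^sp` is the smallest
set containing `*` and closed under sequential/parallel composition with SP pomsets
(the inductive predicate `GenCtx`). -/
theorem spctx_inductive_characterisation (A : Type) (C : Pomset (Option A)) :
    C.IsSPCtx ↔ GenCtx C := by
  constructor
  · rintro ⟨hc, hs⟩
    induction hs with
    | empty => obtain ⟨x, -⟩ := hc; exact Fin.elim0 x
    | single a =>
      obtain ⟨x, hx, -⟩ := hc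
      have hx : a = none := hx
      subst hx
      exact .star
    | seq s1 s2 h1 h2 =>
      rcases (isCtx_seq _ _).1 hc with ⟨h, h'⟩ | ⟨h', h⟩
      · obtain ⟨V, hV, rfl⟩ := exists_map s2 h'
        exact .seqR (h1 h) hV
      · obtain ⟨V, hV, rfl⟩ := exists_map s1 h'
        exact .seqL hV (h2 h)
    | par s1 s2 h1 h2 =>
      rcases (isCtx_par _ _).1 hc with ⟨h, h'⟩ | ⟨h', h⟩
      · obtain ⟨V, hV, rfl⟩ := exists_map s2 h'
        rw [par_comm']
        exact .par hV (h1 h)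
      · obtain ⟨V, hV, rfl⟩ := exists_map s1 h'
        exact .par hV (h2 h)
  · intro h
    induction h with
    | star => exact ⟨⟨PUnit.unit, rfl, fun _ _ => rfl⟩, .single _⟩
    | seqL hU _ ih =>
      exact ⟨(isCtx_seq _ _).2 (Or.inr ⟨noStar_map _, ih.1⟩), (isSP_map _ hU).seq ih.2⟩
    | seqR _ hV ih =>
      exact ⟨(isCtx_seq _ _).2 (Or.inl ⟨ih.1, noStar_map _⟩), ih.2.seq (isSP_map _ hV)⟩
    | par hU _ ih =>
      exact ⟨(isCtx_par _ _).2 (Or.inr ⟨noStar_map _, ih.1⟩), (isSP_map _ hU).par ih.2⟩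

end CKAH
end

section
/- Factorisation of parallel contexts around words: let C ∈ PC^sp be a series-parallel pomset context, let V and W be pomsets, and let U be a non-empty word (non-empty totally ordered pomset) over Σ. If C[U] = V ∥ W, then there exists C' ∈ PC^sp such that either C = C' ∥ W and C'[U] = V, or C = V ∥ C' and C'[U] = W. -/
namespace CKAH

theorem iso_of_fun {A : Type} {a b : LPoset A} (f : a.carrier → b.carrier)
    (hs : Function.Surjective f) (hle : ∀ x y, f x ≤ f y ↔ x ≤ y)
    (hl : ∀ x, b.lab (f x) = a.lab x) : a.Iso b := by
  have hi : Function.Injective f := fun x y hxy =>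
    le_antisymm ((hle x y).1 hxy.le) ((hle y x).1 hxy.ge)
  exact ⟨{ toEquiv := Equiv.ofBijective f ⟨hi, hs⟩, map_rel_iff' := fun {x y} => hle x y }, hl⟩

/-- Restriction of a labelled poset to a subset. -/
noncomputable def LPoset.restr {A : Type} (c : LPoset A) (S : Set c.carrier) : LPoset A where
  carrier := S
  fin := Fintype.ofFinite _
  lab := fun x => c.lab x.val

theorem restr_iso {A : Type} {c d : LPoset A} (e : c.carrier ≃o d.carrier)
    (he : ∀ x, d.lab (e x) = c.lab x) (S : Set c.carrier) :
    (c.restr S).Iso (d.restr (e.symm ⁻¹' S)) := by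
  refine iso_of_fun (fun x => ⟨e x.val, by
    change e.symm (e x.val) ∈ S
    rw [e.symm_apply_apply]
    exact x.2⟩) ?_ ?_ ?_
  · rintro ⟨y, hy⟩
    exact ⟨⟨e.symm y, hy⟩, Subtype.ext (e.apply_symm_apply y)⟩
  · rintro ⟨x, hx⟩ ⟨y, hy⟩
    exact e.le_iff_le
  · rintro ⟨x, hx⟩
    exact he x

/-- Typed injections into `c.insL u` and `v.parL w`. -/
def il {A : Type} (c : LPoset (Option A)) (u : LPoset A)
    (x : {x : c.carrier // c.lab x ≠ none}) : (c.insL u).carrier := Sum.inl x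

def ir {A : Type} (c : LPoset (Option A)) (u : LPoset A)
    (x : u.carrier) : (c.insL u).carrier := Sum.inr x

def pl {A : Type} (v w : LPoset A) (x : v.carrier) : (v.parL w).carrier := Sum.inl x

def pr {A : Type} (v w : LPoset A) (x : w.carrier) : (v.parL w).carrier := Sum.inr x

theorem pl_le {A : Type} {v w : LPoset A} {x y : v.carrier} :
    pl v w x ≤ pl v w y ↔ x ≤ y := Sum.inl_le_inl_iff

theorem pr_le {A : Type} {v w : LPoset A} {x y : w.carrier} :
    pr v w x ≤ pr v w y ↔ x ≤ y := Sum.inr_le_inr_iff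

theorem not_pl_le_pr {A : Type} {v w : LPoset A} {x : v.carrier} {y : w.carrier} :
    ¬ pl v w x ≤ pr v w y := Sum.not_inl_le_inr

theorem not_pr_le_pl {A : Type} {v w : LPoset A} {x : v.carrier} {y : w.carrier} :
    ¬ pr v w y ≤ pl v w x := Sum.not_inr_le_inl

theorem pl_inj {A : Type} {v w : LPoset A} {x y : v.carrier} (h : pl v w x = pl v w y) :
    x = y := Sum.inl.inj h

theorem il_inj {A : Type} {c : LPoset (Option A)} {u : LPoset A}
    {x y : {x : c.carrier // c.lab x ≠ none}} (h : il c u x = il c u y) :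
    x = y := Sum.inl.inj h

theorem pl_ne_pr {A : Type} {v w : LPoset A} {x : v.carrier} {y : w.carrier} :
    pl v w x ≠ pr v w y := Sum.inl_ne_inr

theorem par_cases {A : Type} {v w : LPoset A} (t : (v.parL w).carrier) :
    (∃ x, t = pl v w x) ∨ ∃ y, t = pr v w y := by
  rcases t with x | y
  · exact Or.inl ⟨x, rfl⟩
  · exact Or.inr ⟨y, rfl⟩

theorem ins_cases {A : Type} {c : LPoset (Option A)} {u : LPoset A} (t : (c.insL u).carrier) :
    (∃ x, t = il c u x) ∨ ∃ y, t = ir c u y := by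
  rcases t with x | y
  · exact Or.inl ⟨x, rfl⟩
  · exact Or.inr ⟨y, rfl⟩

theorem seq_inl_le {A : Type} (v w : LPoset A) (x y : v.carrier) :
    (show (v.seqL w).carrier from toLex (Sum.inl x : v.carrier ⊕ w.carrier)) ≤ (show (v.seqL w).carrier from toLex (Sum.inl y : v.carrier ⊕ w.carrier)) ↔
      x ≤ y := Sum.Lex.inl_le_inl_iff

theorem seq_inr_le {A : Type} (v w : LPoset A) (x y : w.carrier) :
    (show (v.seqL w).carrier from toLex (Sum.inr x : v.carrier ⊕ w.carrier)) ≤ (show (v.seqL w).carrier from toLex (Sum.inr y : v.carrier ⊕ w.carrier)) ↔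
      x ≤ y := Sum.Lex.inr_le_inr_iff

theorem isSP_restr {A : Type} {P : Pomset A} (hP : P.IsSP) :
    ∀ c : LPoset A, (⟦c⟧ : Pomset A) = P → ∀ S : Set c.carrier,
      Pomset.IsSP (⟦c.restr S⟧ : Pomset A) := by
  suffices H : ∃ d : LPoset A, (⟦d⟧ : Pomset A) = P ∧ ∀ S : Set d.carrier,
      Pomset.IsSP (⟦d.restr S⟧ : Pomset A) by
    obtain ⟨d, hd, H⟩ := H
    intro c hc S
    obtain ⟨e, he⟩ := Quotient.exact (hc.trans hd.symm)
    rw [show (⟦c.restr S⟧ : Pomset A) = _ from Quotient.sound (restr_iso e he S)]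
    exact H _
  induction hP with
  | empty =>
    refine ⟨LPoset.emptyL A, rfl, fun S => ?_⟩
    have : (⟦(LPoset.emptyL A).restr S⟧ : Pomset A) = Pomset.empty A :=
      Quotient.sound (iso_of_fun (fun x => x.val) (fun x => Fin.elim0 x)
        (fun _ _ => Iff.rfl) (fun _ => rfl))
    rw [this]
    exact .empty
  | single a =>
    refine ⟨LPoset.singleL a, rfl, fun S => ?_⟩
    by_cases hS : PUnit.unit ∈ S
    · have : (⟦(LPoset.singleL a).restr S⟧ : Pomset A) = Pomset.single a :=
        Quotient.sound (iso_of_fun (fun x => x.val) (fun x => ⟨⟨PUnit.unit, hS⟩, rfl⟩)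
          (fun _ _ => Iff.rfl) (fun _ => rfl))
      rw [this]
      exact .single a
    · have : (⟦(LPoset.singleL a).restr S⟧ : Pomset A) = Pomset.empty A :=
        Quotient.sound (iso_of_fun (fun x => absurd x.2 hS) (fun x => Fin.elim0 x)
          (fun x => absurd x.2 hS) (fun x => absurd x.2 hS))
      rw [this]
      exact .empty
  | seq _ _ ih₁ ih₂ =>
    obtain ⟨d₁, rfl, h₁⟩ := ih₁
    obtain ⟨d₂, rfl, h₂⟩ := ih₂
    refine ⟨d₁.seqL d₂, rfl, fun S => ?_⟩
    have : Pomset.seq (⟦d₁.restr {x | toLex (Sum.inl x) ∈ S}⟧ : Pomset A)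
        (⟦d₂.restr {x | toLex (Sum.inr x) ∈ S}⟧ : Pomset A) = (⟦(d₁.seqL d₂).restr S⟧) := by
      refine Quotient.sound (iso_of_fun (a := LPoset.seqL _ _) (fun z => Sum.rec
        (motive := fun _ => ((d₁.seqL d₂).restr S).carrier)
        (fun x => ⟨toLex (Sum.inl x.val), x.2⟩) (fun x => ⟨toLex (Sum.inr x.val), x.2⟩)
        (ofLex z)) ?_ ?_ ?_)
      · rintro ⟨x | x, hx⟩
        · exact ⟨toLex (Sum.inl ⟨x, hx⟩), rfl⟩
        · exact ⟨toLex (Sum.inr ⟨x, hx⟩), rfl⟩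
      · rintro (⟨x, hx⟩ | ⟨x, hx⟩) (⟨y, hy⟩ | ⟨y, hy⟩)
        · exact (seq_inl_le d₁ d₂ x y).trans (seq_inl_le (d₁.restr _) (d₂.restr _) ⟨x, hx⟩ ⟨y, hy⟩).symm
        · exact iff_of_true (Sum.Lex.inl_le_inr _ _) (Sum.Lex.inl_le_inr _ _)
        · exact iff_of_false Sum.Lex.not_inr_le_inl Sum.Lex.not_inr_le_inl
        · exact (seq_inr_le d₁ d₂ x y).trans (seq_inr_le (d₁.restr _) (d₂.restr _) ⟨x, hx⟩ ⟨y, hy⟩).symm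
      · rintro (⟨x, hx⟩ | ⟨x, hx⟩) <;> rfl
    rw [← this]
    exact .seq (h₁ _) (h₂ _)
  | par _ _ ih₁ ih₂ =>
    obtain ⟨d₁, rfl, h₁⟩ := ih₁
    obtain ⟨d₂, rfl, h₂⟩ := ih₂
    refine ⟨d₁.parL d₂, rfl, fun S => ?_⟩
    have : Pomset.par (⟦d₁.restr {x | Sum.inl x ∈ S}⟧ : Pomset A)
        (⟦d₂.restr {x | Sum.inr x ∈ S}⟧ : Pomset A) = (⟦(d₁.parL d₂).restr S⟧) := by
      refine Quotient.sound (iso_of_fun (a := LPoset.parL _ _) (fun z => Sum.rec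
        (motive := fun _ => ((d₁.parL d₂).restr S).carrier)
        (fun x => ⟨Sum.inl x.val, x.2⟩) (fun x => ⟨Sum.inr x.val, x.2⟩) z) ?_ ?_ ?_)
      · rintro ⟨x | x, hx⟩
        · exact ⟨Sum.inl ⟨x, hx⟩, rfl⟩
        · exact ⟨Sum.inr ⟨x, hx⟩, rfl⟩
      · rintro (⟨x, hx⟩ | ⟨x, hx⟩) (⟨y, hy⟩ | ⟨y, hy⟩)
        · exact (pl_le (v := d₁) (w := d₂)).trans
            (pl_le (v := d₁.restr _) (w := d₂.restr _) (x := ⟨x, hx⟩) (y := ⟨y, hy⟩)).symm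
        · exact iff_of_false Sum.not_inl_le_inr Sum.not_inl_le_inr
        · exact iff_of_false Sum.not_inr_le_inl Sum.not_inr_le_inl
        · exact (pr_le (v := d₁) (w := d₂)).trans
            (pr_le (v := d₁.restr _) (w := d₂.restr _) (x := ⟨x, hx⟩) (y := ⟨y, hy⟩)).symm
      · rintro (⟨x, hx⟩ | ⟨x, hx⟩) <;> rfl
    rw [← this]
    exact .par (h₁ _) (h₂ _)

theorem par_comm'_s17 {A : Type} (P Q : Pomset A) : Pomset.par P Q = Pomset.par Q P := by
  induction P using Quotient.ind with | _ p
  induction Q using Quotient.ind with | _ q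
  refine Quotient.sound (iso_of_fun (a := p.parL q) (b := q.parL p) Sum.swap ?_ ?_ ?_)
  · rintro (x | x)
    · exact ⟨Sum.inr x, rfl⟩
    · exact ⟨Sum.inl x, rfl⟩
  · intro x y
    exact Sum.swap_le_swap_iff
  · rintro (x | x) <;> rfl

/-- The main step: the inserted word lies entirely in the left component. -/
theorem locus_left {A : Type} (c : LPoset (Option A)) (hc : c.uniqueStarL)
    (hsp : Pomset.IsSP (⟦c⟧ : Pomset (Option A)))
    (u v w : LPoset A) (u₀ : u.carrier)
    (e : (c.insL u).carrier ≃o (v.parL w).carrier)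
    (he : ∀ x, (v.parL w).lab (e x) = (c.insL u).lab x)
    (hu : ∀ y : u.carrier, ∃ z : v.carrier, e (ir c u y) = pl v w z) :
    ∃ C' : Pomset (Option A), C'.IsSPCtx ∧
      ((⟦c⟧ : Pomset (Option A)) = Pomset.par C' (Pomset.map some (⟦w⟧ : Pomset A)) ∧
        C'.ins (⟦u⟧ : Pomset A) = (⟦v⟧ : Pomset A)) := by
  have hc' := hc
  obtain ⟨s, hs, hsu⟩ := hc'
  replace hs : c.lab s = none := hs
  let S : Set c.carrier := {x | ∀ hx : c.lab x ≠ none, ∃ z : v.carrier,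
    e (il c u ⟨x, hx⟩) = pl v w z}
  have hsS : s ∈ S := fun hx => absurd hs hx
  have hstar : (c.restr S).uniqueStarL := by
    refine ⟨⟨s, hsS⟩, hs, ?_⟩
    rintro ⟨y, hy⟩ hy'
    exact Subtype.ext (hsu y hy')
  refine ⟨⟦c.restr S⟧, ⟨hstar, isSP_restr hsp c rfl S⟩, ?_, ?_⟩
  · have hp : ∀ y : w.carrier, ∃ x : {x : c.carrier // c.lab x ≠ none},
        e (il c u x) = pr v w y := by
      intro y
      obtain ⟨t, hx⟩ := e.surjective (pr v w y)
      obtain ⟨x, rfl⟩ | ⟨x, rfl⟩ := ins_cases t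
      · exact ⟨x, hx⟩
      · obtain ⟨z, hz⟩ := hu x
        exact absurd (hz.symm.trans hx) pl_ne_pr
    choose p hp using hp
    -- elements of `S` are incomparable with elements of `w`
    have hleft : ∀ x ∈ S, ∃ t : (c.insL u).carrier, (∃ z : v.carrier, e t = pl v w z) ∧
        ∀ y : {x : c.carrier // c.lab x ≠ none},
          (x ≤ y.val → t ≤ il c u y) ∧
          (y.val ≤ x → il c u y ≤ t) := by
      intro x hx
      by_cases hxn : c.lab x = none
      · exact ⟨ir c u u₀, hu u₀, fun y => ⟨fun h => ⟨hc, x, hxn, h⟩, fun h => ⟨hc, x, hxn, h⟩⟩⟩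
      · exact ⟨il c u ⟨x, hxn⟩, hx hxn, fun y => ⟨fun h => h, fun h => h⟩⟩
    symm
    refine Quotient.sound (iso_of_fun (a := (c.restr S).parL (w.mapL some)) (b := c)
      (Sum.elim (fun x => x.val) (fun y => (p y).val)) ?_ ?_ ?_)
    · intro x
      by_cases hx : x ∈ S
      · exact ⟨Sum.inl ⟨x, hx⟩, rfl⟩
      · simp only [S, Set.mem_ofPred_eq, not_forall] at hx
        obtain ⟨hxn, hx⟩ := hx
        obtain ⟨z, hz⟩ | ⟨z, hz⟩ := par_cases (e (il c u ⟨x, hxn⟩))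
        · exact absurd ⟨z, hz⟩ hx
        · refine ⟨Sum.inr z, ?_⟩
          have h1 := e.injective ((hp z).trans hz.symm)
          exact congrArg Subtype.val (il_inj h1)
    · rintro (⟨x, hx⟩ | x) (⟨y, hy⟩ | y)
      · exact (pl_le (v := c.restr S) (w := w.mapL some) (x := ⟨x, hx⟩) (y := ⟨y, hy⟩)).symm
      · change w.carrier at y
        refine iff_of_false (fun h => ?_) Sum.not_inl_le_inr
        obtain ⟨t, ⟨z, hz⟩, ht⟩ := hleft x hx
        have := e.le_iff_le.2 ((ht (p y)).1 h)
        rw [hz, hp] at this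
        exact not_pl_le_pr this
      · change w.carrier at x
        refine iff_of_false (fun h => ?_) Sum.not_inr_le_inl
        obtain ⟨t, ⟨z, hz⟩, ht⟩ := hleft y hy
        have := e.le_iff_le.2 ((ht (p x)).2 h)
        rw [hz, hp] at this
        exact not_pr_le_pl this
      · change w.carrier at x y
        have h1 := e.le_iff_le (x := il c u (p x)) (y := il c u (p y))
        rw [hp, hp] at h1
        exact h1.symm.trans (pr_le.trans Sum.inr_le_inr_iff.symm)
    · rintro (⟨x, hx⟩ | y)
      · rfl
      · change w.carrier at y
        have h1 := he (il c u (p y))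
        rw [hp] at h1
        change w.lab y = (c.lab (p y).val).get _ at h1
        change c.lab (p y).val = some (w.lab y)
        rw [h1, Option.some_get]
  · let q : ((c.restr S).insL u).carrier → (c.insL u).carrier :=
      Sum.map (fun x => ⟨x.val.val, x.2⟩) id
    have hq : ∀ t, ∃ z : v.carrier, e (q t) = pl v w z := by
      rintro (⟨⟨x, hx⟩, hxn⟩ | y)
      · exact hx hxn
      · exact hu y
    choose m hm using hq
    refine Quotient.sound (iso_of_fun (a := (c.restr S).insL u) (b := v) m ?_ ?_ ?_)
    · intro z
      obtain ⟨t, hx⟩ := e.surjective (pl v w z)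
      obtain ⟨⟨x, hxn⟩, rfl⟩ | ⟨y, rfl⟩ := ins_cases t
      · refine ⟨Sum.inl ⟨⟨x, fun _ => ⟨z, hx⟩⟩, hxn⟩, ?_⟩
        exact pl_inj ((hm _).symm.trans hx)
      · exact ⟨Sum.inr y, pl_inj ((hm _).symm.trans hx)⟩
    · intro a b
      have h1 := e.le_iff_le (x := q a) (y := q b)
      rw [hm, hm] at h1
      refine (pl_le.symm.trans h1).trans ?_
      rcases a with ⟨⟨x, hx⟩, hxn⟩ | x <;> rcases b with ⟨⟨y, hy⟩, hyn⟩ | y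
      · exact Iff.rfl
      · constructor
        · rintro ⟨-, t, ht, h⟩
          obtain rfl := hsu t ht
          exact ⟨hstar, ⟨t, hsS⟩, ht, h⟩
        · rintro ⟨-, ⟨t, htS⟩, ht, h⟩
          exact ⟨hc, t, ht, h⟩
      · constructor
        · rintro ⟨-, t, ht, h⟩
          obtain rfl := hsu t ht
          exact ⟨hstar, ⟨t, hsS⟩, ht, h⟩
        · rintro ⟨-, ⟨t, htS⟩, ht, h⟩
          exact ⟨hc, t, ht, h⟩
      · exact Iff.rfl
    · intro a
      have h1 := he (q a)
      rw [hm] at h1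
      refine Eq.trans h1 ?_
      rcases a with ⟨⟨x, hx⟩, hxn⟩ | x <;> rfl

/-- If the word meets the left component, it lies inside it. -/
theorem locus_aux {A : Type} (c : LPoset (Option A)) (hc : c.uniqueStarL)
    (hsp : Pomset.IsSP (⟦c⟧ : Pomset (Option A)))
    (u v w : LPoset A) (hw : u.isWordL) (u₀ : u.carrier)
    (e : (c.insL u).carrier ≃o (v.parL w).carrier)
    (he : ∀ x, (v.parL w).lab (e x) = (c.insL u).lab x)
    (z₀ : v.carrier) (hz₀ : e (ir c u u₀) = pl v w z₀) :
    ∃ C' : Pomset (Option A), C'.IsSPCtx ∧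
      ((⟦c⟧ : Pomset (Option A)) = Pomset.par C' (Pomset.map some (⟦w⟧ : Pomset A)) ∧
        C'.ins (⟦u⟧ : Pomset A) = (⟦v⟧ : Pomset A)) := by
  refine locus_left c hc hsp u v w u₀ e he (fun y => ?_)
  obtain ⟨z, hz⟩ | ⟨z, hz⟩ := par_cases (e (ir c u y))
  · exact ⟨z, hz⟩
  · exfalso
    rcases hw u₀ y with h | h
    · have h1 : e (ir c u u₀) ≤ e (ir c u y) := e.le_iff_le.2 h
      rw [hz, hz₀] at h1
      exact not_pl_le_pr h1
    · have h1 : e (ir c u y) ≤ e (ir c u u₀) := e.le_iff_le.2 h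
      rw [hz, hz₀] at h1
      exact not_pr_le_pl h1

/-- **Factorisation of parallel contexts around non-empty words.** -/
theorem context_prime_locus (A : Type) (C : Pomset (Option A)) (hC : C.IsSPCtx)
    (V W : Pomset A) (U : Pomset A) (hU : IsNonemptyWord U)
    (h : C.ins U = Pomset.par V W) :
    ∃ C' : Pomset (Option A), C'.IsSPCtx ∧
      ((C = Pomset.par C' (Pomset.map some W) ∧ C'.ins U = V) ∨
       (C = Pomset.par (Pomset.map some V) C' ∧ C'.ins U = W)) := by
  induction C using Quotient.ind with | _ c
  induction V using Quotient.ind with | _ v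
  induction W using Quotient.ind with | _ w
  induction U using Quotient.ind with | _ u
  obtain ⟨hc, hsp⟩ := hC
  obtain ⟨hw, hne⟩ := hU
  have hu₀ : Nonempty u.carrier := by
    by_contra hemp
    rw [not_nonempty_iff] at hemp
    exact hne (Quotient.sound (iso_of_fun (a := u) (b := LPoset.emptyL A)
      (fun x => hemp.elim x) (fun x => Fin.elim0 x) (fun x => hemp.elim x)
      (fun x => hemp.elim x)))
  obtain ⟨u₀⟩ := hu₀
  obtain ⟨e, he⟩ := Quotient.exact h
  obtain ⟨z, hz⟩ | ⟨z, hz⟩ := par_cases (e (ir c u u₀))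
  · obtain ⟨C', h1, h2⟩ := locus_aux c hc hsp u v w hw u₀ e he z hz
    exact ⟨C', h1, Or.inl h2⟩
  · obtain ⟨C', h1, h2, h3⟩ := locus_aux c hc hsp u w v hw u₀
      (e.trans (OrderIso.sumComm v.carrier w.carrier)) (fun x => by
        rw [← he x]
        change (w.parL v).lab (Sum.swap (e x)) = (v.parL w).lab (e x)
        rcases e x with y | y <;> rfl) z
      (by
        change Sum.swap (e (ir c u u₀)) = _
        rw [hz]; rfl)
    exact ⟨C', h1, Or.inr ⟨h2.trans (par_comm'_s17 _ _), h3⟩⟩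

end CKAH
end
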